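/- Let f : ℝ^d → ℝ ∪ {∞} be proper, convex, and strongly convex with modulus m > 0 on ℝ^d, and let C be a symmetric positive definite d×d matrix. Then for any x₁, x₂ ∈ ℝ^d and any w₁ ∈ prox_f^C(x₁), w₂ ∈ prox_f^C(x₂), one has ‖w₁ − w₂‖ ≤ (λ_max(C)/(λ_min(C) + m)) · ‖x₁ − x₂‖. -/

import Mathlib

open MeasureTheory Filter Topology ProbabilityTheory

noncomputable section

/-- Apply a `d × d` real matrix to a vector of `EuclideanSpace ℝ (Fin d)`. -/
def mApp {d : ℕ} (C : Matrix (Fin d) (Fin d) ℝ) (v : EuclideanSpace ℝ (Fin d)) :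
    EuclideanSpace ℝ (Fin d) :=
  Matrix.toEuclideanLin C v

/-- The squared `C`-norm `‖v‖_C² = vᵀ C v`. -/
def cnormSq {d : ℕ} (C : Matrix (Fin d) (Fin d) ℝ) (v : EuclideanSpace ℝ (Fin d)) : ℝ :=
  inner ℝ v (mApp C v)

/-- The scaled proximal operator (as a set of minimizers):
`prox_f^C(x) = argmin_w { f(w) + (1/2)‖w − x‖_C² }`. -/
def proxSet {d : ℕ} (f : EuclideanSpace ℝ (Fin d) → EReal) (C : Matrix (Fin d) (Fin d) ℝ)
    (x : EuclideanSpace ℝ (Fin d)) : Set (EuclideanSpace ℝ (Fin d)) :=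
  {w | ∀ u, f w + ((cnormSq C (w - x) / 2 : ℝ) : EReal) ≤ f u + ((cnormSq C (u - x) / 2 : ℝ) : EReal)}

/-- A proper extended-real-valued function: not identically `+∞`, never `−∞`. -/
def ProperFn {d : ℕ} (f : EuclideanSpace ℝ (Fin d) → EReal) : Prop :=
  (∃ x, f x ≠ ⊤) ∧ ∀ x, f x ≠ ⊥

/-- Convexity for extended-real-valued functions. -/
def ConvexFnE {d : ℕ} (f : EuclideanSpace ℝ (Fin d) → EReal) : Prop :=
  ∀ x y : EuclideanSpace ℝ (Fin d), ∀ a b : ℝ, 0 ≤ a → 0 ≤ b → a + b = 1 →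
    f (a • x + b • y) ≤ (a : EReal) * f x + (b : EReal) * f y

/-- Operator norm of a matrix acting on Euclidean space. -/
def matNorm {d : ℕ} (C : Matrix (Fin d) (Fin d) ℝ) : ℝ :=
  ‖(Matrix.toEuclideanCLM (𝕜 := ℝ) C : EuclideanSpace ℝ (Fin d) →L[ℝ] EuclideanSpace ℝ (Fin d))‖

/-- Convergence to zero in probability of a sequence of random vectors. -/
def TendstoInProb {Ω : Type*} [MeasurableSpace Ω] (P : Measure Ω) {E : Type*} [Norm E]
    (Y : ℕ → Ω → E) : Prop :=
  ∀ ε : ℝ, 0 < ε → Tendsto (fun n => P {ω | ε ≤ ‖Y n ω‖}) atTop (𝓝 0)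

/-- Boundedness in probability (`O_P(1)`). -/
def BoundedInProb {Ω : Type*} [MeasurableSpace Ω] (P : Measure Ω) {E : Type*} [Norm E]
    (Y : ℕ → Ω → E) : Prop :=
  ∀ ε : ℝ, 0 < ε → ∃ M : ℝ, ∃ N : ℕ, ∀ n ≥ N, P {ω | M < ‖Y n ω‖} ≤ ENNReal.ofReal ε

/-- `Y_n = O_P(r_n)`. -/
def BigOP {Ω : Type*} [MeasurableSpace Ω] (P : Measure Ω) {E : Type*} [Norm E]
    (Y : ℕ → Ω → E) (r : ℕ → ℝ) : Prop :=
  ∀ ε : ℝ, 0 < ε → ∃ M : ℝ, ∃ N : ℕ, ∀ n ≥ N, P {ω | M * r n < ‖Y n ω‖} ≤ ENNReal.ofReal ε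

/-- A sequence of events holds with high probability (probability tending to one). -/
def WithHighProb {Ω : Type*} [MeasurableSpace Ω] (P : Measure Ω) (A : ℕ → Set Ω) : Prop :=
  Tendsto (fun n => P (A n)) atTop (𝓝 1)

end

/-- Strong convexity with modulus `m` for an extended-real-valued function:
`f − (m/2)‖·‖²` is convex. -/
def StrongConvexFnE {d : ℕ} (m : ℝ) (f : EuclideanSpace ℝ (Fin d) → EReal) : Prop :=
  ConvexFnE (fun x => f x - ((m / 2 * ‖x‖ ^ 2 : ℝ) : EReal))

/-!
With `q_x w = ‖w - x‖_C² / 2`, the objective `f + q_x` is strongly convex with modulus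
`λ_min(C) + m`, so its value at any `u` exceeds its minimum, attained at `w`, by at least
`(λ_min(C) + m) / 2 * ‖u - w‖²`. Adding these growth estimates for `(x₁, w₁)` at `u = w₂` and for
`(x₂, w₂)` at `u = w₁`, the values of `f` cancel and the quadratic terms collapse to
`(λ_min(C) + m) * ‖w₁ - w₂‖² ≤ ⟪w₁ - w₂, C (x₁ - x₂)⟫`, after which Cauchy–Schwarz and
`‖C v‖ ≤ λ_max(C) * ‖v‖` give the claim.
-/

open scoped InnerProductSpace

section UniformConvexity

variable {E : Type*} [NormedAddCommGroup E] [NormedSpace ℝ E] {s : Set E} {f g : E → ℝ}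

theorem add_modulus_le_of_uniformConvexOn_of_isMinOn {φ : ℝ → ℝ} {w u : E}
    (hf : UniformConvexOn s φ f) (hmin : IsMinOn f s w) (hw : w ∈ s) (hu : u ∈ s) :
    f w + φ ‖w - u‖ ≤ f u := by
  have segment_bound : ∀ a ∈ Set.Ioo (0 : ℝ) 1, f w + a * φ ‖w - u‖ ≤ f u := by
    rintro a ⟨ha₀, ha₁⟩
    have hb : 0 < 1 - a := sub_pos.2 ha₁
    have hab : a + (1 - a) = 1 := add_sub_cancel a 1
    have hmin' : f w ≤ f (a • w + (1 - a) • u) := hmin (hf.1 hw hu ha₀.le hb.le hab)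
    have hconv := hf.2 hw hu ha₀.le hb.le hab
    simp only [smul_eq_mul] at hconv
    refine le_of_mul_le_mul_left ?_ hb
    linarith
  have hlim : Tendsto (fun a : ℝ ↦ f w + a * φ ‖w - u‖) (𝓝[<] 1) (𝓝 (f w + 1 * φ ‖w - u‖)) :=
    tendsto_nhdsWithin_of_tendsto_nhds (Continuous.tendsto (by fun_prop) 1)
  rw [one_mul] at hlim
  exact le_of_tendsto hlim (eventually_of_mem (Ioo_mem_nhdsLT one_pos) segment_bound)

theorem strongConvexOn_add {m μ : ℝ} (hf : StrongConvexOn s m f) (hg : StrongConvexOn s μ g) :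
    StrongConvexOn s (m + μ) (f + g) :=
  UniformConvexOn.mono (fun r ↦ by simp only [Pi.add_apply]; linarith) (UniformConvexOn.add hf hg)

end UniformConvexity

section QuadraticPerturbation

variable {E : Type*} [NormedAddCommGroup E] [InnerProductSpace ℝ E] {T : E →ₗ[ℝ] E}
  {s : Set E} {f : E → ℝ} {m μ : ℝ}

theorem inner_map_self_convexCombination (T : E →ₗ[ℝ] E) (v w : E) {a b : ℝ} (hab : a + b = 1) :
    ⟪a • v + b • w, T (a • v + b • w)⟫_ℝ =
      a * ⟪v, T v⟫_ℝ + b * ⟪w, T w⟫_ℝ - a * b * ⟪v - w, T (v - w)⟫_ℝ := by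
  obtain rfl := eq_sub_of_add_eq' hab
  simp only [map_add, map_sub, map_smul, inner_add_left, inner_add_right, inner_sub_left,
    inner_sub_right, real_inner_smul_left, real_inner_smul_right]
  ring

theorem strongConvexOn_half_inner_sub_map_sub (hs : Convex ℝ s)
    (hT : ∀ v, μ * ‖v‖ ^ 2 ≤ ⟪v, T v⟫_ℝ) (x : E) :
    StrongConvexOn s μ (fun w ↦ ⟪w - x, T (w - x)⟫_ℝ / 2) := by
  refine ⟨hs, fun u _ v _ a b ha hb hab ↦ ?_⟩
  have hshift : a • u + b • v - x = a • (u - x) + b • (v - x) := by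
    obtain rfl := eq_sub_of_add_eq' hab
    module
  have hcoercive := mul_le_mul_of_nonneg_left (hT (u - v)) (mul_nonneg ha hb)
  simp only [hshift, inner_map_self_convexCombination T _ _ hab, sub_sub_sub_cancel_right,
    smul_eq_mul]
  linarith

theorem cross_difference_inner_sub_map_sub (hT : T.IsSymmetric) (x₁ x₂ w₁ w₂ : E) :
    (⟪w₂ - x₁, T (w₂ - x₁)⟫_ℝ - ⟪w₁ - x₁, T (w₁ - x₁)⟫_ℝ) +
        (⟪w₁ - x₂, T (w₁ - x₂)⟫_ℝ - ⟪w₂ - x₂, T (w₂ - x₂)⟫_ℝ) =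
      2 * ⟪w₁ - w₂, T (x₁ - x₂)⟫_ℝ := by
  have hswap (x w : E) : ⟪x, T w⟫_ℝ = ⟪w, T x⟫_ℝ := by rw [← hT x w, real_inner_comm]
  simp only [map_sub, inner_sub_left, inner_sub_right, hswap x₁, hswap x₂]
  ring

theorem mul_norm_sq_le_inner_map_of_isMinOn (hf : StrongConvexOn s m f) (hsymm : T.IsSymmetric)
    (hT : ∀ v, μ * ‖v‖ ^ 2 ≤ ⟪v, T v⟫_ℝ) {x₁ x₂ w₁ w₂ : E} (hw₁ : w₁ ∈ s) (hw₂ : w₂ ∈ s)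
    (hmin₁ : IsMinOn (fun w ↦ f w + ⟪w - x₁, T (w - x₁)⟫_ℝ / 2) s w₁)
    (hmin₂ : IsMinOn (fun w ↦ f w + ⟪w - x₂, T (w - x₂)⟫_ℝ / 2) s w₂) :
    (μ + m) * ‖w₁ - w₂‖ ^ 2 ≤ ⟪w₁ - w₂, T (x₁ - x₂)⟫_ℝ := by
  have hobj (x : E) : StrongConvexOn s (m + μ) (fun w ↦ f w + ⟪w - x, T (w - x)⟫_ℝ / 2) :=
    strongConvexOn_add hf (strongConvexOn_half_inner_sub_map_sub hf.1 hT x)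
  have growth₁ := add_modulus_le_of_uniformConvexOn_of_isMinOn (hobj x₁) hmin₁ hw₁ hw₂
  have growth₂ := add_modulus_le_of_uniformConvexOn_of_isMinOn (hobj x₂) hmin₂ hw₂ hw₁
  rw [norm_sub_rev] at growth₂
  linarith [cross_difference_inner_sub_map_sub hsymm x₁ x₂ w₁ w₂]

theorem norm_sub_le_of_isMinOn {L : ℝ} (hf : StrongConvexOn s m f) (hsymm : T.IsSymmetric)
    (hT : ∀ v, μ * ‖v‖ ^ 2 ≤ ⟪v, T v⟫_ℝ) (hL : ∀ v, ‖T v‖ ≤ L * ‖v‖) (hpos : 0 < μ + m)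
    {x₁ x₂ w₁ w₂ : E} (hw₁ : w₁ ∈ s) (hw₂ : w₂ ∈ s)
    (hmin₁ : IsMinOn (fun w ↦ f w + ⟪w - x₁, T (w - x₁)⟫_ℝ / 2) s w₁)
    (hmin₂ : IsMinOn (fun w ↦ f w + ⟪w - x₂, T (w - x₂)⟫_ℝ / 2) s w₂) :
    ‖w₁ - w₂‖ ≤ L / (μ + m) * ‖x₁ - x₂‖ := by
  have hLx : 0 ≤ L * ‖x₁ - x₂‖ := (norm_nonneg _).trans (hL _)
  have hprod : ‖w₁ - w₂‖ * ((μ + m) * ‖w₁ - w₂‖) ≤ ‖w₁ - w₂‖ * (L * ‖x₁ - x₂‖) :=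
    calc ‖w₁ - w₂‖ * ((μ + m) * ‖w₁ - w₂‖) = (μ + m) * ‖w₁ - w₂‖ ^ 2 := by ring
      _ ≤ ⟪w₁ - w₂, T (x₁ - x₂)⟫_ℝ :=
        mul_norm_sq_le_inner_map_of_isMinOn hf hsymm hT hw₁ hw₂ hmin₁ hmin₂
      _ ≤ ‖w₁ - w₂‖ * ‖T (x₁ - x₂)‖ := real_inner_le_norm _ _
      _ ≤ ‖w₁ - w₂‖ * (L * ‖x₁ - x₂‖) := by gcongr; exact hL _
  rw [div_mul_eq_mul_div, le_div_iff₀' hpos]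
  rcases (norm_nonneg (w₁ - w₂)).eq_or_lt with hzero | hnorm
  · rwa [← hzero, mul_zero]
  · exact le_of_mul_le_mul_left hprod hnorm

end QuadraticPerturbation

section SpectralBounds

variable {𝕜 E ι : Type*} [RCLike 𝕜] [NormedAddCommGroup E] [InnerProductSpace 𝕜 E] [Fintype ι]
  {b : OrthonormalBasis ι 𝕜 E} {T : E →ₗ[𝕜] E} {ev : ι → ℝ}

theorem inner_map_of_eigenbasis (hb : ∀ i, T (b i) = (ev i : 𝕜) • b i) (i : ι) (v : E) :
    ⟪b i, T v⟫_𝕜 = ev i * ⟪b i, v⟫_𝕜 := by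
  classical
  conv_lhs => rw [← b.sum_repr' v]
  simp [hb, inner_sum, inner_smul_right, b.inner_eq_ite, mul_comm]

theorem iInf_mul_norm_sq_le_re_inner_map (hb : ∀ i, T (b i) = (ev i : 𝕜) • b i) (v : E) :
    (⨅ i, ev i) * ‖v‖ ^ 2 ≤ RCLike.re ⟪v, T v⟫_𝕜 := by
  have hcoord (i : ι) : RCLike.re (⟪v, b i⟫_𝕜 * ⟪b i, T v⟫_𝕜) = ev i * ‖⟪b i, v⟫_𝕜‖ ^ 2 := by
    rw [inner_map_of_eigenbasis hb, mul_left_comm, RCLike.re_ofReal_mul,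
      inner_mul_symm_re_eq_norm, norm_mul, norm_inner_symm v, sq]
  rw [← b.sum_sq_norm_inner_right v, ← b.sum_inner_mul_inner v (T v), map_sum, Finset.mul_sum]
  simp only [hcoord]
  gcongr with i
  exact ciInf_le (Set.finite_range ev).bddBelow i

theorem norm_map_le_iSup_abs_mul_norm (hb : ∀ i, T (b i) = (ev i : 𝕜) • b i) (v : E) :
    ‖T v‖ ≤ (⨆ i, |ev i|) * ‖v‖ := by
  have hsup : 0 ≤ ⨆ i, |ev i| := Real.iSup_nonneg fun i ↦ abs_nonneg (ev i)
  refine (sq_le_sq₀ (norm_nonneg _) (by positivity)).1 ?_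
  rw [mul_pow, ← b.sum_sq_norm_inner_right v, ← b.sum_sq_norm_inner_right (T v), Finset.mul_sum]
  gcongr with i
  rw [inner_map_of_eigenbasis hb, norm_mul, mul_pow, RCLike.norm_ofReal]
  gcongr
  exact le_ciSup (Set.finite_range fun i ↦ |ev i|).bddAbove i

theorem toEuclideanLin_eigenvectorBasis [DecidableEq ι] {A : Matrix ι ι 𝕜} (hA : A.IsHermitian)
    (i : ι) : A.toEuclideanLin (hA.eigenvectorBasis i) =
      (hA.eigenvalues i : 𝕜) • hA.eigenvectorBasis i := by
  ext j
  simpa [Matrix.toLpLin_apply] using congrFun (hA.mulVec_eigenvectorBasis i) j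

end SpectralBounds

section ExtendedReal

variable {d : ℕ} {f : EuclideanSpace ℝ (Fin d) → EReal}

theorem convexOn_toReal_of_convexFnE (hbot : ∀ x, f x ≠ ⊥) (hf : ConvexFnE f) :
    ConvexOn ℝ {x | f x ≠ ⊤} (fun x ↦ (f x).toReal) := by
  have hbound : ∀ x, f x ≠ ⊤ → ∀ y, f y ≠ ⊤ → ∀ a b : ℝ, 0 ≤ a → 0 ≤ b → a + b = 1 →
      f (a • x + b • y) ≤ ((a * (f x).toReal + b * (f y).toReal : ℝ) : EReal) := by
    intro x hx y hy a b ha hb hab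
    have h := hf x y a b ha hb hab
    rw [← EReal.coe_toReal hx (hbot x), ← EReal.coe_toReal hy (hbot y)] at h
    exact_mod_cast h
  refine ⟨fun x hx y hy a b ha hb hab ↦ ?_, fun x hx y hy a b ha hb hab ↦ ?_⟩
  · exact ne_top_of_le_ne_top (EReal.coe_ne_top _) (hbound x hx y hy a b ha hb hab)
  · exact EReal.toReal_le_toReal (hbound x hx y hy a b ha hb hab) (hbot _) (EReal.coe_ne_top _)

theorem strongConvexOn_toReal_of_strongConvexFnE {m : ℝ} (hbot : ∀ x, f x ≠ ⊥)
    (hf : StrongConvexFnE m f) :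
    StrongConvexOn {x | f x ≠ ⊤} m (fun x ↦ (f x).toReal) := by
  have hbot' (x) : f x - ((m / 2 * ‖x‖ ^ 2 : ℝ) : EReal) ≠ ⊥ := by
    rw [sub_eq_add_neg, ← EReal.coe_neg, EReal.add_ne_bot_iff]
    exact ⟨hbot x, EReal.coe_ne_bot _⟩
  have htop (x) : f x - ((m / 2 * ‖x‖ ^ 2 : ℝ) : EReal) ≠ ⊤ ↔ f x ≠ ⊤ := by
    rw [sub_eq_add_neg, ← EReal.coe_neg]
    exact EReal.add_ne_top_iff_ne_top_left (EReal.coe_ne_bot _) (EReal.coe_ne_top _)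
  have hconv := convexOn_toReal_of_convexFnE hbot' hf
  simp only [htop] at hconv
  refine strongConvexOn_iff_convex.2 (hconv.congr fun x hx ↦ ?_)
  exact EReal.toReal_sub hx (hbot x) (EReal.coe_ne_top _) (EReal.coe_ne_bot _)

variable {C : Matrix (Fin d) (Fin d) ℝ} {x w : EuclideanSpace ℝ (Fin d)}

theorem ne_top_of_mem_proxSet (hf : ∃ z, f z ≠ ⊤) (hw : w ∈ proxSet f C x) : f w ≠ ⊤ := by
  obtain ⟨z, hz⟩ := hf
  have hfinite := ne_top_of_le_ne_top (EReal.add_ne_top hz (EReal.coe_ne_top _)) (hw z)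
  exact (EReal.add_ne_top_iff_ne_top_left (EReal.coe_ne_bot _) (EReal.coe_ne_top _)).1 hfinite

theorem isMinOn_toReal_of_mem_proxSet (hbot : ∀ z, f z ≠ ⊥) (hw : w ∈ proxSet f C x) :
    IsMinOn (fun z ↦ (f z).toReal + ⟪z - x, C.toEuclideanLin (z - x)⟫_ℝ / 2) {z | f z ≠ ⊤} w := by
  intro u hu
  have hfw : f w ≠ ⊤ := ne_top_of_mem_proxSet ⟨u, hu⟩ hw
  have hmin := hw u
  rw [← EReal.coe_toReal hfw (hbot w), ← EReal.coe_toReal hu (hbot u)] at hmin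
  exact_mod_cast hmin

end ExtendedReal

theorem scaled_prox_lipschitz_strongly_convex_general {d : ℕ}
    {f : EuclideanSpace ℝ (Fin d) → EReal} (hproper : ProperFn f) {m : ℝ}
    (hsc : StrongConvexFnE m f) {C : Matrix (Fin d) (Fin d) ℝ} (hC : C.IsHermitian)
    (hpos : 0 < (⨅ i, hC.eigenvalues i) + m) {x₁ x₂ w₁ w₂ : EuclideanSpace ℝ (Fin d)}
    (hw₁ : w₁ ∈ proxSet f C x₁) (hw₂ : w₂ ∈ proxSet f C x₂) :
    ‖w₁ - w₂‖ ≤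
      ((⨆ i, |hC.eigenvalues i|) / ((⨅ i, hC.eigenvalues i) + m)) * ‖x₁ - x₂‖ :=
  norm_sub_le_of_isMinOn (strongConvexOn_toReal_of_strongConvexFnE hproper.2 hsc)
    (Matrix.isSymmetric_toEuclideanLin_iff.2 hC)
    (iInf_mul_norm_sq_le_re_inner_map (toEuclideanLin_eigenvectorBasis hC))
    (norm_map_le_iSup_abs_mul_norm (toEuclideanLin_eigenvectorBasis hC)) hpos
    (ne_top_of_mem_proxSet hproper.1 hw₁) (ne_top_of_mem_proxSet hproper.1 hw₂)
    (isMinOn_toReal_of_mem_proxSet hproper.2 hw₁) (isMinOn_toReal_of_mem_proxSet hproper.2 hw₂)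

/-- For a proper, strongly convex function `f` with modulus `m`, the scaled proximal operator is
Lipschitz with constant `λ_max(C)/(λ_min(C) + m)` in the Euclidean norm. -/
theorem scaled_prox_lipschitz_strongly_convex
    (d : ℕ) (hd : 0 < d) (f : EuclideanSpace ℝ (Fin d) → EReal)
    (hproper : ProperFn f) (hconv : ConvexFnE f)
    (m : ℝ) (hm : 0 < m) (hsc : StrongConvexFnE m f)
    (C : Matrix (Fin d) (Fin d) ℝ) (hC : C.PosDef)
    (x₁ x₂ w₁ w₂ : EuclideanSpace ℝ (Fin d))
    (hw₁ : w₁ ∈ proxSet f C x₁) (hw₂ : w₂ ∈ proxSet f C x₂) :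
    ‖w₁ - w₂‖ ≤
      ((⨆ i, hC.1.eigenvalues i) / ((⨅ i, hC.1.eigenvalues i) + m)) * ‖x₁ - x₂‖ := by
  have hmin : 0 ≤ ⨅ i, hC.1.eigenvalues i := Real.iInf_nonneg fun i ↦ (hC.eigenvalues_pos i).le
  simpa only [abs_of_pos (hC.eigenvalues_pos _)] using
    scaled_prox_lipschitz_strongly_convex_general hproper hsc hC.1 (by linarith) hw₁ hw₂
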